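/- If (B₁ | A₁) and (B₂ | A₂) are irreducible skew-symmetric augmented matrices, each obtained from the same skew-symmetric augmented matrix (B | A) by a finite sequence of permutations and reductions of type 1 or 2, then (B₁ | A₁) is a permutation of (B₂ | A₂); in particular they have the same dimension. -/

import Mathlib

/-- A skew-symmetric augmented matrix `(B ∣ A)` of dimension `n`:
`B` is an `n × n` integer matrix with `Bᵀ = -B` and `A` is an integer
column vector of length `n`.  Dimension `0` gives the empty matrix. -/
structure SkewAug where
  n : ℕ
  B : Matrix (Fin n) (Fin n) ℤ
  A : Fin n → ℤ
  skew : B.transpose = -B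

namespace SkewAug

/-- The permutation matrix of a permutation `σ` of `Fin n`. -/
def permMatrixOf {n : ℕ} (σ : Equiv.Perm (Fin n)) : Matrix (Fin n) (Fin n) ℤ :=
  Matrix.of fun i j => if σ j = i then 1 else 0

/-- `P` is a permutation matrix. -/
def IsPermMatrix {n : ℕ} (P : Matrix (Fin n) (Fin n) ℤ) : Prop :=
  ∃ σ : Equiv.Perm (Fin n), P = permMatrixOf σ

/-- `PermStep M N` : `N` is a permutation of `M`, i.e. there is a permutation
matrix `P` with `N = (P M.B Pᵀ ∣ P M.A)`. -/
def PermStep (M N : SkewAug) : Prop :=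
  ∃ (h : M.n = N.n) (P : Matrix (Fin N.n) (Fin N.n) ℤ),
    IsPermMatrix P ∧
    N.B = P * (Matrix.reindex (finCongr h) (finCongr h) M.B) * P.transpose ∧
    N.A = P.mulVec (fun i => M.A (Fin.cast h.symm i))

/-- `DeleteAt M S N` : `N` is obtained from `M` by deleting the rows and
columns of `M.B` indexed by `S` and the entries of `M.A` indexed by `S`. -/
def DeleteAt (M : SkewAug) (S : Set (Fin M.n)) (N : SkewAug) : Prop :=
  ∃ e : Fin N.n → Fin M.n, StrictMono e ∧ (∀ k, k ∈ Set.range e ↔ k ∉ S) ∧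
    (∀ i j, N.B i j = M.B (e i) (e j)) ∧ (∀ i, N.A i = M.A (e i))

/-- The condition allowing a reduction of type 1 at index `j`:
`A j = 0` and the `j`-th column of `B` is the zero vector or equals `A`. -/
def Red1Cond (M : SkewAug) (j : Fin M.n) : Prop :=
  M.A j = 0 ∧ ((∀ i, M.B i j = 0) ∨ (∀ i, M.B i j = M.A i))

/-- The condition allowing a reduction of type 2 at distinct indices `r, t`:
`A r = -A t` and the sum of the `r`-th and `t`-th columns of `B` equals `A`. -/
def Red2Cond (M : SkewAug) (r t : Fin M.n) : Prop :=
  r ≠ t ∧ M.A r = -M.A t ∧ ∀ i, M.B i r + M.B i t = M.A i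

/-- `N` is obtained from `M` by a reduction of type 1. -/
def Red1 (M N : SkewAug) : Prop :=
  ∃ j : Fin M.n, Red1Cond M j ∧ DeleteAt M {j} N

/-- `N` is obtained from `M` by a reduction of type 2. -/
def Red2 (M N : SkewAug) : Prop :=
  ∃ r t : Fin M.n, Red2Cond M r t ∧ DeleteAt M {r, t} N

/-- A single move: a permutation, a reduction of type 1 or 2, or an
extension of type 1 or 2 (the inverse of a reduction). -/
def Move (M N : SkewAug) : Prop :=
  PermStep M N ∨ Red1 M N ∨ Red2 M N ∨ Red1 N M ∨ Red2 N M

/-- S-equivalence: `M` can be transformed into `N` by a finite sequence of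
moves. -/
def SEquiv : SkewAug → SkewAug → Prop :=
  Relation.ReflTransGen Move

/-- A reduction of type 1 or type 2 can be applied to `M`. -/
def Reducible (M : SkewAug) : Prop :=
  (∃ j, Red1Cond M j) ∨ (∃ r t, Red2Cond M r t)

/-- `M` is irreducible: no reduction of type 1 or type 2 can be applied. -/
def Irreducible (M : SkewAug) : Prop := ¬ Reducible M

/-- The empty skew-symmetric augmented matrix. -/
def empty : SkewAug := ⟨0, 0, 0, by simp⟩

/-- `M` is trivial if it is S-equivalent to the empty matrix. -/
def Trivial (M : SkewAug) : Prop := SEquiv M empty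

end SkewAug

/-- A move which is a permutation or a reduction of type 1 or 2 (no
extensions). -/
def SkewAug.RedMove (M N : SkewAug) : Prop :=
  SkewAug.PermStep M N ∨ SkewAug.Red1 M N ∨ SkewAug.Red2 M N

namespace SkewAug

/-- `e` exhibits `N` as `M` with the indices of `S` deleted, up to reordering. -/
def DelVia (M : SkewAug) (S : Set (Fin M.n)) (N : SkewAug) (e : Fin N.n → Fin M.n) : Prop :=
  Function.Injective e ∧ (∀ k, k ∈ Set.range e ↔ k ∉ S) ∧
    (∀ i j, N.B i j = M.B (e i) (e j)) ∧ (∀ i, N.A i = M.A (e i))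

def Del (M : SkewAug) (S : Set (Fin M.n)) (N : SkewAug) : Prop := ∃ e, DelVia M S N e

def Cond (M : SkewAug) (S : Set (Fin M.n)) : Prop :=
  (∃ j, Red1Cond M j ∧ S = {j}) ∨ (∃ r t, Red2Cond M r t ∧ S = {r, t})

def Iso (M N : SkewAug) : Prop := Del M ∅ N

def RedS (M N : SkewAug) : Prop := ∃ S, Cond M S ∧ Del M S N

theorem iso_refl (M : SkewAug) : Iso M M :=
  ⟨id, Function.injective_id, by simp, by simp, by simp⟩

theorem del_factor {M P Q : SkewAug} {S T : Set (Fin M.n)} {e : Fin P.n → Fin M.n}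
    (he : DelVia M S P e) (hQ : Del M T Q) (hST : S ⊆ T) : Del P (e ⁻¹' T) Q := by
  obtain ⟨f, hf1, hf2, hf3, hf4⟩ := hQ
  obtain ⟨he1, he2, he3, he4⟩ := he
  have : ∀ q, ∃ p, e p = f q := by
    intro q
    have h1 := (hf2 (f q)).1 ⟨q, rfl⟩
    exact (he2 (f q)).2 fun h => h1 (hST h)
  choose g hg using this
  refine ⟨g, ?_, ?_, ?_, ?_⟩
  · intro a b hab
    apply hf1
    rw [← hg, ← hg, hab]
  · intro k
    rw [Set.mem_preimage, ← hf2]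
    constructor
    · rintro ⟨q, rfl⟩
      exact ⟨q, (hg q).symm⟩
    · rintro ⟨q, hq⟩
      exact ⟨q, he1 (by rw [hg, hq])⟩
  · intro i j
    rw [he3, hg, hg, hf3]
  · intro i
    rw [he4, hg, hf4]

theorem del_exists (M : SkewAug) (S : Set (Fin M.n)) : ∃ N, Del M S N := by
  classical
  let E := (Fintype.equivFin {k : Fin M.n // k ∉ S})
  refine ⟨⟨Fintype.card {k : Fin M.n // k ∉ S},
    fun i j => M.B (E.symm i).1 (E.symm j).1, fun i => M.A (E.symm i).1, ?_⟩,
    fun i => (E.symm i).1, ?_, ?_, ?_, ?_⟩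
  · ext i j
    have := congrFun (congrFun M.skew (E.symm i).1) (E.symm j).1
    exact this
  · intro a b hab
    exact E.symm.injective (Subtype.ext hab)
  · intro k
    constructor
    · rintro ⟨q, rfl⟩
      exact (E.symm q).2
    · intro hk
      exact ⟨E ⟨k, hk⟩, by simp⟩
  · intro i j; rfl
  · intro i; rfl

theorem iso_symm {M N : SkewAug} (h : Iso M N) : Iso N M := by
  obtain ⟨e, he⟩ := h
  exact del_factor he (iso_refl M) subset_rfl

theorem del_unique {M P Q : SkewAug} {S : Set (Fin M.n)} (hP : Del M S P) (hQ : Del M S Q) :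
    Iso P Q := by
  obtain ⟨e, he⟩ := hP
  have h := del_factor he hQ subset_rfl
  have : e ⁻¹' S = ∅ := by
    ext x
    have := (he.2.1 (e x)).1 ⟨x, rfl⟩
    simpa using this
  rwa [this] at h

theorem iso_trans {M N P : SkewAug} (h : Iso M N) (h' : Iso N P) : Iso M P :=
  del_unique (iso_symm h) h'

theorem cond_pull {M P : SkewAug} {S T : Set (Fin M.n)} {e : Fin P.n → Fin M.n}
    (he : DelVia M S P e) (hT : Cond M T) (hd : Disjoint S T) : Cond P (e ⁻¹' T) := by
  obtain ⟨he1, he2, he3, he4⟩ := he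
  have key : ∀ k ∈ T, ∃ p, e p = k := fun k hk =>
    (he2 k).2 fun h => Set.disjoint_left.1 hd h hk
  rcases hT with ⟨j, hj, rfl⟩ | ⟨r, t, hrt, rfl⟩
  · obtain ⟨p, rfl⟩ := key j (by simp)
    refine Or.inl ⟨p, ⟨by rw [he4]; exact hj.1, ?_⟩, ?_⟩
    · rcases hj.2 with h | h
      · left; intro i; rw [he3]; exact h _
      · right; intro i; rw [he3, he4]; exact h _
    · ext x; simp [he1.eq_iff]
  · obtain ⟨p, rfl⟩ := key r (by simp)
    obtain ⟨q, rfl⟩ := key t (by simp)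
    obtain ⟨h1, h2, h3⟩ := hrt
    refine Or.inr ⟨p, q, ⟨fun h => h1 (by rw [h]), by rw [he4, he4]; exact h2, ?_⟩, ?_⟩
    · intro i; rw [he3, he3, he4]; exact h3 _
    · ext x; simp [he1.eq_iff]

theorem iso_redS {M N P : SkewAug} (h : Iso M N) (h' : RedS N P) : RedS M P := by
  obtain ⟨e, he⟩ := iso_symm h
  obtain ⟨T, hT, hP⟩ := h'
  exact ⟨e ⁻¹' T, cond_pull he hT (by simp), del_factor he hP (by simp)⟩

theorem reducible_of_cond {M : SkewAug} {S : Set (Fin M.n)} (h : Cond M S) : Reducible M := by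
  rcases h with ⟨j, hj, _⟩ | ⟨r, t, h, _⟩
  · exact Or.inl ⟨j, hj⟩
  · exact Or.inr ⟨r, t, h⟩

theorem exists_redS {M : SkewAug} (h : Reducible M) : ∃ N, RedS M N := by
  have : ∃ S, Cond M S := by
    rcases h with ⟨j, hj⟩ | ⟨r, t, h⟩
    · exact ⟨_, Or.inl ⟨j, hj, rfl⟩⟩
    · exact ⟨_, Or.inr ⟨r, t, h, rfl⟩⟩
  obtain ⟨S, hS⟩ := this
  obtain ⟨N, hN⟩ := del_exists M S
  exact ⟨N, S, hS, hN⟩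

theorem redS_lt {M N : SkewAug} (h : RedS M N) : N.n < M.n := by
  obtain ⟨S, hS, e, he1, he2, -, -⟩ := h
  have : ∃ k, k ∈ S := by
    rcases hS with ⟨j, _, rfl⟩ | ⟨r, t, _, rfl⟩
    · exact ⟨j, by simp⟩
    · exact ⟨r, by simp⟩
  obtain ⟨k, hk⟩ := this
  have := Fintype.card_lt_of_injective_of_notMem e he1 (b := k) (fun h => (he2 k).1 h hk)
  simpa using this

theorem skew_apply (M : SkewAug) (i j : Fin M.n) : M.B i j = - M.B j i := by
  have := congrFun (congrFun M.skew j) i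
  simpa using this

theorem red2_symm {M : SkewAug} {r t : Fin M.n} (h : Red2Cond M r t) : Red2Cond M t r :=
  ⟨h.1.symm, by rw [h.2.1]; ring, fun i => by rw [add_comm]; exact h.2.2 i⟩

theorem red1_other {M : SkewAug} {r t : Fin M.n} (h : Red2Cond M r t) (hr : Red1Cond M r) :
    Red1Cond M t := by
  obtain ⟨h1, h2, h3⟩ := h
  obtain ⟨h4, h5⟩ := hr
  refine ⟨by omega, ?_⟩
  rcases h5 with h5 | h5
  · right; intro i; have := h3 i; have := h5 i; omega
  · left; intro i; have := h3 i; have := h5 i; omega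

theorem shared_iso {M P Q : SkewAug} {r t t' : Fin M.n} (h : Red2Cond M r t)
    (h' : Red2Cond M r t') (hP : Del M {r, t} P) (hQ : Del M {r, t'} Q) : Iso P Q := by
  have hcol : ∀ i, M.B i t = M.B i t' := fun i => by
    have := h.2.2 i; have := h'.2.2 i; omega
  have hrow : ∀ i, M.B t i = M.B t' i := fun i => by
    rw [skew_apply, hcol, ← skew_apply]
  have hA : M.A t = M.A t' := by have := h.2.1; have := h'.2.1; omega
  obtain ⟨e, he1, he2, he3, he4⟩ := hP
  refine del_unique (M := M) (S := {r, t'})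
    ⟨fun i => Equiv.swap t t' (e i), ?_, ?_, ?_, ?_⟩ hQ
  · exact (Equiv.swap t t').injective.comp he1
  · intro k
    have hk : k ∈ Set.range (fun i => Equiv.swap t t' (e i)) ↔ Equiv.swap t t' k ∈ Set.range e := by
      constructor
      · rintro ⟨i, rfl⟩
        exact ⟨i, by simp⟩
      · rintro ⟨i, hi⟩
        exact ⟨i, by simp [hi]⟩
    rw [hk, he2]
    have hr1 := h.1
    have hr2 := h'.1
    simp only [Set.mem_insert_iff, Set.mem_singleton_iff]
    rw [Equiv.swap_apply_eq_iff, Equiv.swap_apply_eq_iff, Equiv.swap_apply_left,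
      Equiv.swap_apply_of_ne_of_ne hr1 hr2]
  · have c : ∀ i x, M.B i (Equiv.swap t t' x) = M.B i x := by
      intro i x
      rw [Equiv.swap_apply_def]; split_ifs with a b
      · rw [a, hcol]
      · rw [b, hcol]
      · rfl
    intro i j
    change P.B i j = M.B (Equiv.swap t t' (e i)) (Equiv.swap t t' (e j))
    rw [c, skew_apply M, c, ← skew_apply M, he3]
  · intro i
    change P.A i = M.A (Equiv.swap t t' (e i))
    rw [he4, Equiv.swap_apply_def]; split_ifs with a b
    · rw [a, hA]
    · rw [b, hA]
    · rfl

theorem conf_mixed {M P Q : SkewAug} {r t : Fin M.n} (h : Red2Cond M r t) (hr : Red1Cond M r)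
    (hP : Del M {r} P) (hQ : Del M {r, t} Q) : RedS P Q := by
  obtain ⟨e, he⟩ := hP
  have hc : Cond M {t} := Or.inl ⟨t, red1_other h hr, rfl⟩
  have h1 := cond_pull he hc (by simpa using h.1)
  have h2 := del_factor he hQ (by simp)
  refine ⟨_, h1, ?_⟩
  convert h2 using 1
  ext x
  have := (he.2.1 (e x)).1 ⟨x, rfl⟩
  simp only [Set.mem_singleton_iff] at this
  simp [this]

theorem redS_union {M P Q : SkewAug} {S T : Set (Fin M.n)} (hT : Cond M T)
    (hd : Disjoint S T) (hP : Del M S P) (hQ : Del M (S ∪ T) Q) : RedS P Q := by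
  obtain ⟨e, he⟩ := hP
  refine ⟨_, cond_pull he hT hd, ?_⟩
  convert del_factor he hQ (by simp) using 1
  ext x
  have := (he.2.1 (e x)).1 ⟨x, rfl⟩
  simp [this]

theorem conf {M P₁ P₂ : SkewAug} (h1 : RedS M P₁) (h2 : RedS M P₂) :
    ∃ Q, (Iso P₁ Q ∨ RedS P₁ Q) ∧ (Iso P₂ Q ∨ RedS P₂ Q) := by
  obtain ⟨S, hS, hP⟩ := h1
  obtain ⟨T, hT, hQ⟩ := h2
  by_cases hd : Disjoint S T
  · obtain ⟨Q, hQ'⟩ := del_exists M (S ∪ T)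
    exact ⟨Q, Or.inr (redS_union hT hd hP hQ'),
      Or.inr (redS_union hS hd.symm hQ (by rwa [Set.union_comm]))⟩
  obtain ⟨x, hxS, hxT⟩ := Set.not_disjoint_iff.1 hd
  have norm : ∀ U : Set (Fin M.n), Cond M U → x ∈ U →
      (Red1Cond M x ∧ U = {x}) ∨ ∃ t, Red2Cond M x t ∧ U = {x, t} := by
    intro U hU hx
    rcases hU with ⟨j, hj, rfl⟩ | ⟨r, t, h, rfl⟩
    · obtain rfl : x = j := by simpa using hx
      exact Or.inl ⟨hj, rfl⟩
    · rcases hx with rfl | hx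
      · exact Or.inr ⟨t, h, rfl⟩
      · obtain rfl : x = t := by simpa using hx
        exact Or.inr ⟨r, red2_symm h, Set.pair_comm _ _⟩
  rcases norm S hS hxS with ⟨a, rfl⟩ | ⟨t, a, rfl⟩ <;>
    rcases norm T hT hxT with ⟨b, rfl⟩ | ⟨t', b, rfl⟩
  · exact ⟨P₂, Or.inl (del_unique hP hQ), Or.inl (iso_refl _)⟩
  · exact ⟨P₂, Or.inr (conf_mixed b a hP hQ), Or.inl (iso_refl _)⟩
  · exact ⟨P₁, Or.inl (iso_refl _), Or.inr (conf_mixed a b hQ hP)⟩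
  · exact ⟨P₂, Or.inl (shared_iso a b hP hQ), Or.inl (iso_refl _)⟩

/-- `N` is an irreducible form of `M`. -/
inductive Nf : SkewAug → SkewAug → Prop
  | base {M N : SkewAug} : Iso M N → Irreducible N → Nf M N
  | step {M N P : SkewAug} : RedS M N → Nf N P → Nf M P

theorem nf_iso {M N P : SkewAug} (h : Iso M N) (h' : Nf N P) : Nf M P := by
  cases h' with
  | base a b => exact .base (iso_trans h a) b
  | step a b => exact .step (iso_redS h a) b

theorem nf_exists : ∀ (k : ℕ) (M : SkewAug), M.n = k → ∃ N, Nf M N := by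
  intro k
  induction k using Nat.strong_induction_on with
  | _ k ih =>
    intro M hM
    by_cases h : Reducible M
    · obtain ⟨N, hN⟩ := exists_redS h
      obtain ⟨P, hP⟩ := ih N.n (hM ▸ redS_lt hN) N rfl
      exact ⟨P, .step hN hP⟩
    · exact ⟨M, .base (iso_refl M) h⟩

theorem not_redS_of_iso {M N P : SkewAug} (h : Iso M N) (hN : Irreducible N) : ¬ RedS M P := by
  intro hr
  obtain ⟨S, hS, _⟩ := iso_redS (iso_symm h) hr
  exact hN (reducible_of_cond hS)

theorem nf_unique : ∀ (k : ℕ) (M N₁ N₂ : SkewAug), M.n = k → Nf M N₁ → Nf M N₂ → Iso N₁ N₂ := by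
  intro k
  induction k using Nat.strong_induction_on with
  | _ k ih =>
    intro M N₁ N₂ hM h1 h2
    cases h1 with
    | base a b =>
      cases h2 with
      | base c d => exact iso_trans (iso_symm a) c
      | step c d => exact absurd c (not_redS_of_iso a b)
    | step a b =>
      cases h2 with
      | base c d => exact absurd a (not_redS_of_iso c d)
      | step c d =>
        obtain ⟨Q, hQ1, hQ2⟩ := conf a c
        obtain ⟨N, hN⟩ := nf_exists _ Q rfl
        have g : ∀ P, (Iso P Q ∨ RedS P Q) → Nf P N := fun P hP =>
          hP.elim (fun h => nf_iso h hN) (fun h => .step h hN)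
        exact iso_trans (ih _ (hM ▸ redS_lt a) _ _ _ rfl b (g _ hQ1))
          (ih _ (hM ▸ redS_lt c) _ _ _ rfl (g _ hQ2) d)

theorem permMatrixOf_mulVec {n : ℕ} (σ : Equiv.Perm (Fin n)) (v : Fin n → ℤ) (i : Fin n) :
    (permMatrixOf σ).mulVec v i = v (σ.symm i) := by
  simp [permMatrixOf, Matrix.mulVec, dotProduct, ← Equiv.eq_symm_apply]

theorem permMatrixOf_conj {n : ℕ} (σ : Equiv.Perm (Fin n)) (B : Matrix (Fin n) (Fin n) ℤ)
    (i j : Fin n) :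
    (permMatrixOf σ * B * (permMatrixOf σ).transpose) i j = B (σ.symm i) (σ.symm j) := by
  simp [permMatrixOf, Matrix.mul_apply, ← Equiv.eq_symm_apply]

theorem iso_of_permStep {M N : SkewAug} (h : PermStep M N) : Iso M N := by
  obtain ⟨h, P, ⟨σ, rfl⟩, hB, hA⟩ := h
  refine ⟨fun i => Fin.cast h.symm (σ.symm i), ?_, ?_, ?_, ?_⟩
  · intro a b hab
    simpa using hab
  · intro k
    simp only [Set.mem_empty_iff_false, not_false_eq_true, iff_true]
    exact ⟨σ (Fin.cast h k), by simp⟩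
  · intro i j
    rw [hB, permMatrixOf_conj]
    rfl
  · intro i
    rw [hA, permMatrixOf_mulVec]

theorem permStep_of_iso {M N : SkewAug} (h : Iso M N) : PermStep M N := by
  obtain ⟨e, he1, he2, he3, he4⟩ := h
  have hs : Function.Surjective e := fun k => (he2 k).2 (by simp)
  have hn : M.n = N.n := by
    have := Fintype.card_of_bijective ⟨he1, hs⟩
    simpa using this.symm
  let σ : Equiv.Perm (Fin N.n) := ((Equiv.ofBijective e ⟨he1, hs⟩).trans (finCongr hn)).symm
  have hσ : ∀ i, σ.symm i = Fin.cast hn (e i) := fun i => rfl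
  refine ⟨hn, permMatrixOf σ, ⟨σ, rfl⟩, ?_, ?_⟩
  · ext i j
    rw [permMatrixOf_conj, hσ, hσ, he3]
    rfl
  · ext i
    rw [permMatrixOf_mulVec, hσ, he4]
    rfl

theorem del_of_deleteAt {M N : SkewAug} {S : Set (Fin M.n)} (h : DeleteAt M S N) : Del M S N := by
  obtain ⟨e, a, b⟩ := h
  exact ⟨e, a.injective, b⟩

theorem nf_of_redMoves {M N : SkewAug} (h : Relation.ReflTransGen RedMove M N)
    (hN : Irreducible N) : Nf M N := by
  induction h using Relation.ReflTransGen.head_induction_on with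
  | refl => exact .base (iso_refl _) hN
  | head hm _ ih =>
    rcases hm with h | ⟨j, hj, hd⟩ | ⟨r, t, hrt, hd⟩
    · exact nf_iso (iso_of_permStep h) ih
    · exact .step ⟨_, Or.inl ⟨j, hj, rfl⟩, del_of_deleteAt hd⟩ ih
    · exact .step ⟨_, Or.inr ⟨r, t, hrt, rfl⟩, del_of_deleteAt hd⟩ ih

end SkewAug

/-- If two irreducible skew-symmetric augmented matrices are
each obtained from the same skew-symmetric augmented matrix `(B ∣ A)` by a
finite sequence of permutations and reductions of type 1 or 2, then one is a
permutation of the other; in particular they have the same dimension. -/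
theorem irreducible_reductions_unique (M M₁ M₂ : SkewAug)
    (h₁ : Relation.ReflTransGen SkewAug.RedMove M M₁)
    (h₂ : Relation.ReflTransGen SkewAug.RedMove M M₂)
    (hi₁ : SkewAug.Irreducible M₁) (hi₂ : SkewAug.Irreducible M₂) :
    SkewAug.PermStep M₂ M₁ ∧ M₁.n = M₂.n := by
  have h := SkewAug.permStep_of_iso (SkewAug.nf_unique _ M M₂ M₁ rfl
    (SkewAug.nf_of_redMoves h₂ hi₂) (SkewAug.nf_of_redMoves h₁ hi₁))
  exact ⟨h, h.1.symm⟩
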